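/- Action of X_n^− on the Schur basis via vertical strips: for every partition μ, all m, n ∈ ℤ and i ∈ {0,1}, the following holds in W_i: X_n^− (s_μ e^{mα}e^{iα/2}) = (−1)^{n+1+i} ( ∑_{j≥0} q^{2j} · sgn((b_j, μ')) · ∑_λ s_λ ) e^{(m−1)α}e^{iα/2}, where b_j := 2m−n−1+i−j, μ' is the conjugate partition of μ, (b_j,μ') is the juxtaposed tuple, the inner sum is over all partitions λ such that π((b_j,μ')) is a partition and λ − π((b_j,μ'))' is a vertical j-strip (ρ' denoting the conjugate of ρ), and only finitely many values of j contribute nonzero terms. -/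

import Mathlib

/-!
Put `C = 2m − n − 1 + i`. On `P·e^{mα}` the operator `X_n^−` acts by `∑_j H_{C+j} · h_j(∂) P`, where
`∑_k H_k t^k = exp (−∑ (1+q^{2n}) p_n tⁿ/n) = E(−t)·E(−q²t)`, that is,
`H_k = (−1)^k ∑_b q^{2b} e_b e_{k−b}`. Exchanging the two sums,
`X_n^− P = (−1)^C ∑_b q^{2b} e_b · ∑_j (−1)^j e_{C−b+j} h_j(∂) P`.

The inner sum is the dual Bernstein operator. The generating function of the `h_j(∂)` is the algebra
homomorphism `p_n ↦ p_n + tⁿ`, which multiplies `∑_k e_k x^k` by `1 + t x`. So on a determinant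
`det (e_{ν_i−i+j})` its coefficients are the maximal minors of a matrix with one extra column, and
the inner sum is the expansion along the first row of the determinant attached to the tuple
`(C−b, ν)`. This applies to `s_μ = det (e_{μ'_i−i+j})`, by Jacobi's complementary minor theorem for
the mutually inverse Toeplitz matrices of `h` and `±e`.

It remains to expand `e_b · det (e_{T_i−i+j})` for `T = (C−b, μ')`. Permuting rows replaces `T` by
`π(T)` up to the sign `sgn T`, with value zero if `T` is degenerate or `π(T)` has a negative entry.
By duality again the determinant becomes `s_ρ` with `ρ = π(T)'`, and the vertical Pieri rule expands
`e_b s_ρ`. That rule comes from a linear factor as well: the Jacobi–Trudi determinant of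
`(1 + t x) ∑_k h_k x^k` expands by rows into Schur functions and by columns into minors, and one of
these minors is `e_b s_ρ`.
-/

open MvPolynomial

noncomputable section

/-- The base field `F = ℚ(q)`. -/
abbrev Fq : Type := RatFunc ℚ

/-- The indeterminate `q ∈ ℚ(q)`. -/
def qq : Fq := RatFunc.X

/-- `Λ_F = F[p₁,p₂,…]`, with the variable `X n` (for `n : ℕ+`) the power sum `p_n`. -/
abbrev LamF : Type := MvPolynomial ℕ+ Fq

/-- The power sum `p_n`. -/
def ppF (n : ℕ+) : LamF := X n

/-- The family `g` with generating function `∑_k g_k t^k = exp (∑_{n≥1} c n · p_n tⁿ/n)`,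
characterized by `g 0 = 1` and the recursion obtained by differentiating:
`(k+1) · g (k+1) = ∑_{i=0}^{k} c (i+1) · p_{i+1} · g (k−i)`. -/
def genFamF (c : ℕ → Fq) : ℕ → LamF
  | 0 => 1
  | (k+1) => (((k : Fq) + 1)⁻¹) •
      ∑ i ∈ Finset.range (k+1), c (i+1) • (ppF ⟨i+1, Nat.succ_pos i⟩ * genFamF c (k - i))
  decreasing_by exact Nat.lt_succ_of_le (Nat.sub_le k i)

/-- The complete homogeneous symmetric function `h_k`. -/
def hhF : ℕ → LamF := genFamF fun _ => 1

/-- The elementary symmetric function `e_k`. -/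
def eeF : ℕ → LamF := genFamF fun n => (-1)^(n+1)

/-- `h` indexed by `ℤ` (zero in negative degrees). -/
def hZF (n : ℤ) : LamF := if 0 ≤ n then hhF n.toNat else 0

/-- `e` indexed by `ℤ` (zero in negative degrees). -/
def eZF (n : ℤ) : LamF := if 0 ≤ n then eeF n.toNat else 0

/-- The creation coefficients of `X⁺(z)`:
`exp (∑ ((1+q^{2n})q^{−n}/n)·p_n·zⁿ) = ∑_k HpF k · z^k`. -/
def HpF : ℕ → LamF := genFamF fun n => (1 + qq ^ (2*n)) * (qq⁻¹) ^ n

/-- `HpF` indexed by `ℤ`. -/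
def HZp (n : ℤ) : LamF := if 0 ≤ n then HpF n.toNat else 0

/-- The annihilation avatars for `X⁺(z)`: since
`(1+q^{2n})q^{−n}/n · a_n = q^{−n}·∂/∂p_n`, the coefficient of `z^{−j}` in
`exp (−∑ ((1+q^{2n})q^{−n}/n)·a_n·z^{−n})` is `ApF j` with `p_i ↦ i·∂/∂p_i`
substituted, where `∑_k ApF k t^k = exp (−∑ q^{−n} p_n tⁿ/n)`. -/
def ApF : ℕ → LamF := genFamF fun n => -((qq⁻¹) ^ n)

/-- The creation coefficients of `X⁻(z)`:
`exp (−∑ ((1+q^{2n})/n)·p_n·zⁿ) = ∑_k HmF k · z^k`. -/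
def HmF : ℕ → LamF := genFamF fun n => -(1 + qq ^ (2*n))

/-- `HmF` indexed by `ℤ`. -/
def HZm (n : ℤ) : LamF := if 0 ≤ n then HmF n.toNat else 0

/-- The differential operator `∏_i (i·∂/∂p_i)^(α i)`. -/
def monOpF (α : ℕ+ →₀ ℕ) : Module.End Fq LamF :=
  ((α.support.sort (· ≤ ·)).map fun (i : ℕ+) =>
    (((i : ℕ) : Fq) • (pderiv i).toLinearMap) ^ (α i)).prod

/-- `f(∂) P`: substitute `p_i ↦ i·∂/∂p_i` in `f` and apply to `P`. -/
def DopF (f : LamF) (P : LamF) : LamF := ∑ α ∈ f.support, f.coeff α • monOpF α P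

/-- Bound for the weighted degree of `P` (weight of `p_i` is `i`). -/
def wboundF (P : LamF) : ℕ := P.support.sup fun α => α.sum fun i k => (i : ℕ) * k

/-- The level-one Fock space `W_i = Λ_F ⊗ F[ℤα]e^{iα/2}`, realized as `ℤ →₀ Λ_F`;
`Finsupp.single m P` represents `P·e^{mα}e^{iα/2}`. -/
abbrev W : Type := ℤ →₀ LamF

/-- The Drinfeld current component `X_n^+` on `W_i` (the parameter `i ∈ {0,1}` enters
through `z^∂ e^{mα}e^{iα/2} = z^{2m+i} e^{mα}e^{iα/2}`): the coefficient of `z^{−n−1}` in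
`X⁺(z) = exp(∑((1+q^{2n})q^{−n}/n)a_{−n}zⁿ)·exp(−∑((1+q^{2n})q^{−n}/n)a_n z^{−n})·e^α z^∂`,
i.e. `X_n^+(P·e^{mα}) = ∑_j HpF_{j−n−1−2m−i} · (ApF j)(∂) P · e^{(m+1)α}`
(only the finitely many `j ≤ wboundF P` contribute). -/
def Xp (i n : ℤ) (w : W) : W :=
  w.sum fun m P => Finsupp.single (m+1)
    (∑ j ∈ Finset.range (wboundF P + 1),
      HZp ((j : ℤ) - n - 1 - 2*m - i) * DopF (ApF j) P)

/-- The Drinfeld current component `X_n^-` on `W_i`: the coefficient of `z^{−n−1}` in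
`X⁻(z) = exp(−∑((1+q^{2n})/n)a_{−n}zⁿ)·exp(∑((1+q^{2n})/n)a_n z^{−n})·e^{−α} z^{−∂}`,
i.e. `X_n^-(P·e^{mα}) = ∑_j HmF_{j+2m+i−n−1} · h_j(∂) P · e^{(m−1)α}`
(here `(1+q^{2n})/n · a_n = ∂/∂p_n`, whose generating family is `h`). -/
def Xm (i n : ℤ) (w : W) : W :=
  w.sum fun m P => Finsupp.single (m-1)
    (∑ j ∈ Finset.range (wboundF P + 1),
      HZm ((j : ℤ) + 2*m + i - n - 1) * DopF (hhF j) P)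

/-- The `q`-factorial `[r]! = ∏_{k=1}^r (q^k − q^{−k})/(q − q^{−1})`. -/
def qfact (r : ℕ) : Fq := ∏ k ∈ Finset.range r, (qq ^ (k+1) - (qq⁻¹) ^ (k+1)) / (qq - qq⁻¹)

/-- The divided power `x^{(r)} = x^r / [r]!` of an operator on `W`. -/
def divpow (f : W → W) (r : ℕ) (w : W) : W := (qfact r)⁻¹ • (f^[r] w)

/-- Schur function of an integer tuple: `s_ρ = det (h_{ρ_i − i + j})`. -/
def schurF {l : ℕ} (ρ : Fin l → ℤ) : LamF :=
  (Matrix.of fun i j : Fin l => hZF (ρ i - (i.1 : ℤ) + (j.1 : ℤ))).det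

/-- Dual Schur function of an integer tuple: `s_{ρ'} = det (e_{ρ_i − i + j})`. -/
def schurEF {l : ℕ} (ρ : Fin l → ℤ) : LamF :=
  (Matrix.of fun i j : Fin l => eZF (ρ i - (i.1 : ℤ) + (j.1 : ℤ))).det

/-- `q^{±∂}`: `q^{ε∂}(P·e^{mα}e^{iα/2}) = q^{ε(2m+i)}·P·e^{mα}e^{iα/2}`. -/
def qd (i ε : ℤ) (w : W) : W := w.sum fun m P => Finsupp.single m (qq ^ (ε * (2*m + i)) • P)

/-- The Chevalley generator `e₁ = X₀⁺`. -/
def che1 (i : ℤ) : W → W := Xp i 0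
/-- The Chevalley generator `f₁ = X₀⁻`. -/
def chf1 (i : ℤ) : W → W := Xm i 0
/-- The Chevalley generator `e₀ = X₁⁻ ∘ q^{−∂}`. -/
def che0 (i : ℤ) (w : W) : W := Xm i 1 (qd i (-1) w)
/-- The Chevalley generator `f₀ = q^∂ ∘ X₋₁⁺`. -/
def chf0 (i : ℤ) (w : W) : W := qd i 1 (Xp i (-1) w)


/-- `δ = (r−1, r−2, …, 1, 0)` as a function `Fin r → ℤ`. -/
def deltaT (r : ℕ) (i : Fin r) : ℤ := (r : ℤ) - 1 - (i.1 : ℤ)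

/-- `σ` sorts the tuple `ν + δ` into strictly decreasing order. -/
def Sorts {r : ℕ} (ν : Fin r → ℤ) (σ : Equiv.Perm (Fin r)) : Prop :=
  StrictAnti fun i => ν (σ i) + deltaT r (σ i)

-- `sgn(ν)`: `0` if `ν` is degenerate (`ν+δ` has a repeated entry, so no sorting
-- permutation exists), and otherwise `(−1)^{ℓ(σ)} = sign σ` for the unique `σ` with
-- `σ(ν+δ)` strictly decreasing.
open Classical in
def sgnT {r : ℕ} (ν : Fin r → ℤ) : ℤ :=
  if h : ∃ σ, Sorts ν σ then (Equiv.Perm.sign h.choose : ℤ) else 0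

-- `π(ν) := σ(ν+δ) − δ` for the sorting permutation `σ` (junk value `0` if `ν` is
-- degenerate).
open Classical in
def piT {r : ℕ} (ν : Fin r → ℤ) : Fin r → ℤ :=
  if h : ∃ σ, Sorts ν σ then
    (fun i => ν (h.choose i) + deltaT r (h.choose i) - deltaT r i) else 0

/-- `π` is a partition: weakly decreasing with nonnegative entries. -/
def IsPartitionT {r : ℕ} (π : Fin r → ℤ) : Prop := Antitone π ∧ ∀ i, 0 ≤ π i

/-- The entry in row `t` (0-indexed) of a tuple, padded by `0`. -/
def padZ {r : ℕ} (π : Fin r → ℤ) (t : ℕ) : ℤ := if h : t < r then π ⟨t, h⟩ else 0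

/-- The number of entries of `π` that are `≥ c+1`, i.e. the (0-indexed) `c`-th entry of
the conjugate partition `π'`. -/
def conjT {r : ℕ} (π : Fin r → ℤ) (c : ℕ) : ℤ :=
  ((Finset.univ.filter fun i : Fin r => (c : ℤ) + 1 ≤ π i).card : ℤ)

/-! ### Coefficients of power series at integer indices -/

section CoeffZ

variable {R S : Type*} [CommRing R] [CommRing S]

/-- The coefficients of a power series, extended by zero to negative indices. -/
def coeffZ (F : PowerSeries R) (n : ℤ) : R :=
  if 0 ≤ n then PowerSeries.coeff n.toNat F else 0

theorem coeffZ_natCast (F : PowerSeries R) (n : ℕ) : coeffZ F n = PowerSeries.coeff n F := by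
  simp [coeffZ]

theorem coeffZ_of_neg (F : PowerSeries R) {n : ℤ} (hn : n < 0) : coeffZ F n = 0 :=
  if_neg hn.not_ge

theorem map_coeffZ (f : R →+* S) (F : PowerSeries R) (n : ℤ) :
    f (coeffZ F n) = coeffZ (F.map f) n := by
  simp [coeffZ, apply_ite f]

theorem coeffZ_one (n : ℤ) : coeffZ (1 : PowerSeries R) n = if n = 0 then 1 else 0 := by
  rcases lt_or_ge n 0 with hn | hn
  · rw [coeffZ_of_neg 1 hn, if_neg hn.ne]
  · lift n to ℕ using hn
    simp [coeffZ_natCast, PowerSeries.coeff_one]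

theorem coeffZ_evalNegHom (F : PowerSeries R) (n : ℤ) :
    coeffZ (PowerSeries.evalNegHom F) n = (-1) ^ n.natAbs * coeffZ F n := by
  rcases lt_or_ge n 0 with hn | hn
  · rw [coeffZ_of_neg _ hn, coeffZ_of_neg _ hn, mul_zero]
  · lift n to ℕ using hn
    simp [coeffZ_natCast, PowerSeries.evalNegHom, PowerSeries.coeff_rescale]

theorem sum_range_coeff_mul_coeffZ (F G : PowerSeries R) {k : ℤ} {N : ℕ} (hk : k < N) :
    ∑ b ∈ Finset.range N, PowerSeries.coeff b F * coeffZ G (k - b) = coeffZ (F * G) k := by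
  rcases lt_or_ge k 0 with hk' | hk'
  · rw [coeffZ_of_neg _ hk']
    exact Finset.sum_eq_zero fun b _ => by rw [coeffZ_of_neg _ (by omega), mul_zero]
  · lift k to ℕ using hk'
    rw [coeffZ_natCast, PowerSeries.coeff_mul, Finset.Nat.sum_antidiagonal_eq_sum_range_succ_mk]
    symm
    refine Finset.sum_subset_zero_on_sdiff (Finset.range_mono (by omega)) (fun b hb => ?_)
      (fun b hb => ?_)
    · rw [Finset.mem_sdiff, Finset.mem_range, Finset.mem_range] at hb
      rw [coeffZ_of_neg _ (by omega), mul_zero]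
    · rw [Finset.mem_range] at hb
      rw [← Nat.cast_sub (by omega), coeffZ_natCast]

theorem coeffZ_mul (F G : PowerSeries R) (k : ℤ) :
    coeffZ (F * G) k = ∑ᶠ b : ℕ, PowerSeries.coeff b F * coeffZ G (k - b) := by
  rw [← sum_range_coeff_mul_coeffZ F G (show k < (k.toNat + 1 : ℕ) by omega)]
  refine (finsum_eq_sum_of_support_subset _ fun b hb => ?_).symm
  rw [Finset.coe_range, Set.mem_Iio]
  by_contra! h
  refine hb ?_
  simp only [coeffZ_of_neg G (show k - b < 0 by omega), mul_zero]

theorem sum_range_coeffZ_mul_coeffZ (F G : PowerSeries R) {a : ℤ} {N : ℕ} (ha : a < N) (b : ℕ) :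
    ∑ k ∈ Finset.range N, coeffZ F (a - k) * coeffZ G (k - b) = coeffZ (F * G) (a - b) := by
  induction b generalizing a N with
  | zero =>
    rw [mul_comm F, Nat.cast_zero, sub_zero, ← sum_range_coeff_mul_coeffZ G F ha]
    simp only [sub_zero, coeffZ_natCast, mul_comm]
  | succ b ih =>
    cases N with
    | zero => rw [Finset.sum_range_zero, coeffZ_of_neg _ (by push_cast at ha ⊢; omega)]
    | succ N =>
      have h := ih (a := a - 1) (N := N) (by push_cast at ha; omega)
      rw [Finset.sum_range_succ', coeffZ_of_neg G (by push_cast; omega), mul_zero, add_zero,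
        show a - ((b + 1 : ℕ) : ℤ) = a - 1 - b by push_cast; ring, ← h]
      refine Finset.sum_congr rfl fun k _ => ?_
      push_cast
      ring_nf

/-- The `N × N` lower triangular Toeplitz matrix with symbol `F`. -/
def toeplitz (F : PowerSeries R) (N : ℕ) : Matrix (Fin N) (Fin N) R :=
  Matrix.of fun a b => coeffZ F ((a : ℕ) - (b : ℕ) : ℤ)

theorem toeplitz_apply (F : PowerSeries R) {N : ℕ} (a b : Fin N) :
    toeplitz F N a b = coeffZ F ((a : ℕ) - (b : ℕ) : ℤ) := rfl

theorem toeplitz_one (N : ℕ) : toeplitz (1 : PowerSeries R) N = 1 := by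
  ext a b
  simp only [toeplitz_apply, coeffZ_one, Matrix.one_apply, sub_eq_zero, Nat.cast_inj, Fin.ext_iff]

theorem toeplitz_mul (F G : PowerSeries R) (N : ℕ) :
    toeplitz F N * toeplitz G N = toeplitz (F * G) N := by
  ext a b
  rw [toeplitz_apply, ← sum_range_coeffZ_mul_coeffZ F G (by exact_mod_cast a.2) b,
    Finset.sum_range, Matrix.mul_apply]
  rfl

theorem det_toeplitz (F : PowerSeries R) (N : ℕ) :
    (toeplitz F N).det = PowerSeries.constantCoeff F ^ N := by
  rw [Matrix.det_of_isLowerTriangular]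
  · simp [toeplitz, coeffZ]
  · intro a b hab
    have : (a : ℕ) < b := hab
    exact coeffZ_of_neg F (by omega)

end CoeffZ

/-! ### Jacobi–Trudi determinants -/

section JacobiTrudi

variable {R S : Type*} [CommRing R] [CommRing S]

/-- The Jacobi–Trudi determinant `det (F_{ν_i - i + j})` of an integer tuple; for `F = ∑ h_k t^k`
it is the Schur function `s_ν`. -/
def jacobiTrudi (F : PowerSeries R) {l : ℕ} (ν : Fin l → ℤ) : R :=
  (Matrix.of fun i j : Fin l => coeffZ F (ν i - ((i : ℕ) : ℤ) + ((j : ℕ) : ℤ))).det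

theorem map_jacobiTrudi (f : R →+* S) (F : PowerSeries R) {l : ℕ} (ν : Fin l → ℤ) :
    f (jacobiTrudi F ν) = jacobiTrudi (F.map f) ν := by
  simp only [jacobiTrudi, RingHom.map_det, RingHom.mapMatrix_apply, ← map_coeffZ]
  rfl

theorem jacobiTrudi_evalNegHom (F : PowerSeries R) {l : ℕ} (α : Fin l → ℕ) :
    jacobiTrudi (PowerSeries.evalNegHom F) (fun i => (α i : ℤ)) =
      (-1) ^ (∑ i, α i) * jacobiTrudi F fun i => (α i : ℤ) := by
  have hsign (i j : Fin l) :
      (-1 : R) ^ ((α i : ℤ) - (i : ℕ) + (j : ℕ)).natAbs =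
        (-1) ^ (α i + i : ℕ) * (-1) ^ (j : ℕ) := by
    rw [← pow_add]
    refine neg_one_pow_congr ?_
    rw [Int.natAbs_even, Int.even_add, Int.even_sub, Nat.even_add, Nat.even_add]
    simp only [Int.even_coe_nat]
  have hentry : (Matrix.of fun i j : Fin l =>
        coeffZ (PowerSeries.evalNegHom F) ((α i : ℤ) - (i : ℕ) + (j : ℕ))) =
      Matrix.of fun i j => (-1) ^ (α i + i : ℕ) * Matrix.of (fun i j : Fin l =>
        (-1) ^ (j : ℕ) * Matrix.of (fun i j : Fin l =>
          coeffZ F ((α i : ℤ) - (i : ℕ) + (j : ℕ))) i j) i j := by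
    ext i j
    simp only [Matrix.of_apply, coeffZ_evalNegHom, hsign, mul_assoc]
  have hprod : (∏ i, (-1 : R) ^ (α i + i : ℕ)) * ∏ i : Fin l, (-1) ^ (i : ℕ) =
      (-1) ^ (∑ i, α i) := by
    rw [← Finset.prod_mul_distrib, ← Finset.prod_pow_eq_pow_sum]
    refine Finset.prod_congr rfl fun i _ => ?_
    rw [← pow_add, add_assoc, pow_add, (Even.add_self _).neg_one_pow, mul_one]
  rw [jacobiTrudi, hentry, Matrix.det_mul_column, Matrix.det_mul_row, ← mul_assoc, hprod]
  rfl

/-- The determinant depends on `ν` only through the multiset of rows indexed by `ν + δ`. -/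
theorem jacobiTrudi_eq_det_add_deltaT (F : PowerSeries R) {l : ℕ} (ν : Fin l → ℤ) :
    jacobiTrudi F ν = (Matrix.of fun i j : Fin l =>
      coeffZ F (ν i + deltaT l i - l + 1 + ((j : ℕ) : ℤ))).det := by
  unfold jacobiTrudi
  congr 2
  ext i j
  congr 1
  simp only [deltaT]
  ring

theorem jacobiTrudi_eq_zero_of_not_injective (F : PowerSeries R) {l : ℕ} {ν : Fin l → ℤ}
    (hν : ¬ Function.Injective fun i => ν i + deltaT l i) : jacobiTrudi F ν = 0 := by
  obtain ⟨a, b, hab, hne⟩ := Function.not_injective_iff.1 hν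
  rw [jacobiTrudi_eq_det_add_deltaT]
  refine Matrix.det_zero_of_row_eq hne ?_
  ext j
  simp only [Matrix.of_apply]
  rw [hab]

theorem antitone_of_strictAnti_add_deltaT {l : ℕ} {ν : Fin l → ℤ}
    (hν : StrictAnti fun i => ν i + deltaT l i) : Antitone ν := by
  cases l with
  | zero => exact fun i => i.elim0
  | succ l =>
    refine Fin.antitone_iff_succ_le.2 fun i => ?_
    have hlt := hν (Fin.castSucc_lt_succ (i := i))
    simp only [deltaT, Fin.val_succ, Fin.val_castSucc] at hlt
    push_cast at hlt
    omega

theorem jacobiTrudi_eq_zero_of_not_antitone (F : PowerSeries R) {l : ℕ} {ν : Fin l → ℤ}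
    (hsucc : ∀ i j, i ≤ j → ν j ≤ ν i + 1) (hν : ¬ Antitone ν) : jacobiTrudi F ν = 0 := by
  refine jacobiTrudi_eq_zero_of_not_injective F fun hinj => hν ?_
  refine antitone_of_strictAnti_add_deltaT
    (Antitone.strictAnti_of_injective (fun i j hij => ?_) hinj)
  rcases hij.eq_or_lt with rfl | hlt
  · rfl
  · have : (i : ℕ) < j := hlt
    have := hsucc i j hij
    simp only [deltaT]
    omega

theorem jacobiTrudi_eq_zero_of_neg (F : PowerSeries R) {l : ℕ} {ν : Fin l → ℤ} (hν : Antitone ν)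
    {i : Fin l} (hi : ν i < 0) : jacobiTrudi F ν = 0 := by
  obtain ⟨l, rfl⟩ := Nat.exists_eq_succ_of_ne_zero i.pos.ne'
  have hlast : ν (Fin.last l) < 0 := (hν (Fin.le_last i)).trans_lt hi
  refine Matrix.det_eq_zero_of_row_eq_zero (Fin.last l) fun j => coeffZ_of_neg F ?_
  have := j.is_le
  rw [Fin.val_last]
  omega

theorem exists_sorts {l : ℕ} {ν : Fin l → ℤ}
    (hν : Function.Injective fun i => ν i + deltaT l i) : ∃ σ, Sorts ν σ := by
  let f : Fin l → ℤ := fun i => -(ν i + deltaT l i)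
  have hinj : Function.Injective (f ∘ Tuple.sort f) :=
    (neg_injective.comp hν).comp (Tuple.sort f).injective
  exact ⟨Tuple.sort f, fun i j hij =>
    neg_lt_neg_iff.1 ((Tuple.monotone_sort f).strictMono_of_injective hinj hij)⟩

theorem jacobiTrudi_eq_sgnT_smul_piT (F : PowerSeries R) {l : ℕ} (ν : Fin l → ℤ) :
    jacobiTrudi F ν = sgnT ν • jacobiTrudi F (piT ν) := by
  by_cases h : ∃ σ, Sorts ν σ
  · have hperm : (Matrix.of fun i j : Fin l =>
        coeffZ F (piT ν i + deltaT l i - l + 1 + ((j : ℕ) : ℤ))) =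
        (Matrix.of fun i j : Fin l =>
          coeffZ F (ν i + deltaT l i - l + 1 + ((j : ℕ) : ℤ))).submatrix h.choose id := by
      ext i j
      simp only [Matrix.submatrix_apply, Matrix.of_apply, piT, dif_pos h, id, sub_add_cancel]
    rw [jacobiTrudi_eq_det_add_deltaT F ν, jacobiTrudi_eq_det_add_deltaT F (piT ν), sgnT, dif_pos h,
      hperm, Matrix.det_permute]
    rcases Int.units_eq_one_or (Equiv.Perm.sign h.choose) with hs | hs <;> simp [hs]
  · rw [sgnT, dif_neg h, zero_smul]
    exact jacobiTrudi_eq_zero_of_not_injective F fun hν => h (exists_sorts hν)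

theorem piT_antitone {l : ℕ} (ν : Fin l → ℤ) : Antitone (piT ν) := by
  by_cases h : ∃ σ, Sorts ν σ
  · refine antitone_of_strictAnti_add_deltaT ?_
    simp only [piT, dif_pos h, sub_add_cancel]
    exact h.choose_spec
  · simp only [piT, dif_neg h]
    exact antitone_const

end JacobiTrudi

/-! ### Duality for conjugate partitions -/

section Duality

variable {R : Type*} [CommRing R] {l t : ℕ} {α : Fin l → ℕ} {β : Fin t → ℕ}

/-- `α` and `β` are the row and column lengths of one Young diagram inside an `l × t` box, that is,
conjugate partitions, each possibly padded by zeros. -/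
structure AreConjugate (α : Fin l → ℕ) (β : Fin t → ℕ) : Prop where
  lt_iff : ∀ (i : Fin l) (j : Fin t), (j : ℕ) < α i ↔ (i : ℕ) < β j
  left_le : ∀ i, α i ≤ t
  right_le : ∀ j, β j ≤ l

namespace AreConjugate

theorem symm (h : AreConjugate α β) : AreConjugate β α :=
  ⟨fun j i => (h.lt_iff i j).symm, h.right_le, h.left_le⟩

theorem antitone_left (h : AreConjugate α β) : Antitone α := by
  intro i i' hi
  by_contra! hlt
  let j : Fin t := ⟨α i, hlt.trans_le (h.left_le i')⟩
  have hj : (i' : ℕ) < β j := (h.lt_iff i' j).1 hlt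
  exact lt_irrefl _ ((h.lt_iff i j).2 ((Fin.val_fin_le.2 hi).trans_lt hj))

theorem strictMono_left (h : AreConjugate α β) : StrictMono fun i : Fin l => α i.rev + (i : ℕ) :=
  fun _ _ hi => add_lt_add_of_le_of_lt (h.antitone_left (Fin.rev_le_rev.2 hi.le)) hi

theorem strictMono_right (h : AreConjugate α β) :
    StrictMono fun j : Fin t => l + (j : ℕ) - β j := by
  intro j j' hj
  have := h.symm.antitone_left hj.le
  have := h.right_le j
  have : (j : ℕ) < j' := hj
  dsimp only
  omega

/-- The permutation recording the vertical and the horizontal steps of the boundary path of the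
diagram. -/
theorem exists_perm (h : AreConjugate α β) : ∃ ρ : Equiv.Perm (Fin (l + t)),
    (∀ i, (ρ (Fin.castAdd t i) : ℕ) = α i.rev + i) ∧
      ∀ j, (ρ (Fin.natAdd l j) : ℕ) = l + j - β j := by
  let u : Fin l → Fin (l + t) := fun i => ⟨α i.rev + i, by have := h.left_le i.rev; omega⟩
  let v : Fin t → Fin (l + t) := fun j => ⟨l + j - β j, by omega⟩
  have hu : Function.Injective u := fun i i' hi => h.strictMono_left.injective (Fin.mk.inj hi)
  have hv : Function.Injective v := fun j j' hj => h.strictMono_right.injective (Fin.mk.inj hj)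
  have huv (i : Fin l) (j : Fin t) : u i ≠ v j := fun he => by
    have := h.lt_iff i.rev j
    have := h.right_le j
    simp only [u, v, Fin.mk.injEq, Fin.val_rev] at *
    omega
  have hinj : Function.Injective (Sum.elim u v ∘ finSumFinEquiv.symm) :=
    (hu.sumElim hv huv).comp finSumFinEquiv.symm.injective
  exact ⟨Equiv.ofBijective _ (Finite.injective_iff_bijective.1 hinj), fun i => by simp [u],
    fun j => by simp [v]⟩

end AreConjugate

theorem sign_eq_prod_of_strictMono_blocks (ρ : Equiv.Perm (Fin (l + t)))
    (hl : StrictMono (ρ ∘ Fin.castAdd t)) (hr : StrictMono (ρ ∘ Fin.natAdd l)) :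
    Equiv.Perm.sign ρ = ∏ j : Fin t, ∏ i : Fin l,
      if ρ (Fin.natAdd l j) < ρ (Fin.castAdd t i) then -1 else 1 := by
  have hIio (x : Fin (l + t)) (f : Fin (l + t) → ℤˣ) : ∏ y ∈ Finset.Iio x, f y =
      (∏ i : Fin l, if Fin.castAdd t i < x then f (Fin.castAdd t i) else 1) *
        ∏ j : Fin t, if Fin.natAdd l j < x then f (Fin.natAdd l j) else 1 := by
    rw [← Fin.prod_univ_add (fun y => if y < x then f y else 1), ← Finset.prod_filter,
      Finset.filter_gt_eq_Iio]
  have hleft (i x : Fin l) : (if Fin.castAdd t i < Fin.castAdd t x then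
      (if ρ (Fin.castAdd t i) < ρ (Fin.castAdd t x) then (1 : ℤˣ) else -1) else 1) = 1 := by
    split_ifs with hx hρ
    · rfl
    · exact absurd (hl hx) hρ
    · rfl
  have hright (j x : Fin t) : (if Fin.natAdd l j < Fin.natAdd l x then
      (if ρ (Fin.natAdd l j) < ρ (Fin.natAdd l x) then (1 : ℤˣ) else -1) else 1) = 1 := by
    split_ifs with hx hρ
    · rfl
    · exact absurd (hr (by simpa using hx)) hρ
    · rfl
  have hlr (i : Fin l) (j : Fin t) : Fin.castAdd t i < Fin.natAdd l j :=
    Fin.lt_def.2 (by rw [Fin.val_castAdd, Fin.val_natAdd]; omega)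
  simp only [Equiv.Perm.sign_eq_prod_prod_Iio, Fin.prod_univ_add, hIio, hleft, hright, hlr,
    (hlr _ _).not_gt, if_true, if_false, Finset.prod_const_one, mul_one, one_mul]
  refine Finset.prod_congr rfl fun j _ => Finset.prod_congr rfl fun i _ => ?_
  have hne : ρ (Fin.castAdd t i) ≠ ρ (Fin.natAdd l j) := ρ.injective.ne (hlr i j).ne
  rcases hne.lt_or_gt with hij | hij <;> simp [hij, hij.not_gt]

theorem AreConjugate.sign_perm (h : AreConjugate α β) (ρ : Equiv.Perm (Fin (l + t)))
    (hl : ∀ i, (ρ (Fin.castAdd t i) : ℕ) = α i.rev + i)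
    (hr : ∀ j, (ρ (Fin.natAdd l j) : ℕ) = l + j - β j) :
    Equiv.Perm.sign ρ = (-1) ^ ∑ j, β j := by
  have hinv (j : Fin t) (i : Fin l) :
      ρ (Fin.natAdd l j) < ρ (Fin.castAdd t i) ↔ (i.rev : ℕ) < β j := by
    rw [Fin.lt_def, hl, hr, ← h.lt_iff]
    have := h.lt_iff i.rev j
    have := h.right_le j
    rw [Fin.val_rev] at *
    omega
  rw [sign_eq_prod_of_strictMono_blocks ρ, ← Finset.prod_pow_eq_pow_sum]
  · refine Finset.prod_congr rfl fun j _ => ?_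
    simp only [hinv]
    rw [← Equiv.prod_comp Fin.revPerm]
    simp only [Fin.revPerm_apply, Fin.rev_rev]
    rw [Finset.prod_ite, Finset.prod_const, Finset.prod_const_one, mul_one,
      Fin.card_filter_val_lt, min_eq_right (h.right_le j)]
  · exact fun i i' hi => Fin.lt_def.2 <| by
      simpa only [Function.comp_apply, hl] using h.strictMono_left hi
  · exact fun j j' hj => Fin.lt_def.2 <| by
      simpa only [Function.comp_apply, hr] using h.strictMono_right hj

theorem det_toBlocks₁₁_of_mul_eq_one {m n : Type*} [Fintype m] [Fintype n] [DecidableEq m]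
    [DecidableEq n] {A B : Matrix (m ⊕ n) (m ⊕ n) R} (h : A * B = 1) :
    A.toBlocks₁₁.det = A.det * B.toBlocks₂₂.det := by
  rw [← Matrix.fromBlocks_toBlocks A, ← Matrix.fromBlocks_toBlocks B,
    Matrix.fromBlocks_multiply, ← Matrix.fromBlocks_one, Matrix.fromBlocks_inj] at h
  obtain ⟨-, h12, -, h22⟩ := h
  have hmul : A * Matrix.fromBlocks 1 B.toBlocks₁₂ 0 B.toBlocks₂₂ =
      Matrix.fromBlocks A.toBlocks₁₁ 0 A.toBlocks₂₁ 1 := by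
    conv_lhs => rw [← Matrix.fromBlocks_toBlocks A]
    rw [Matrix.fromBlocks_multiply, h12, h22]
    simp only [Matrix.mul_one, Matrix.mul_zero, add_zero]
  simpa using (congrArg Matrix.det hmul).symm

theorem AreConjugate.jacobiTrudi_eq (h : AreConjugate α β) {F G : PowerSeries R}
    (hF : PowerSeries.constantCoeff F = 1) (hFG : F * PowerSeries.evalNegHom G = 1) :
    jacobiTrudi F (fun i => (α i : ℤ)) = jacobiTrudi G fun j => (β j : ℤ) := by
  obtain ⟨ρ, hl, hr⟩ := h.exists_perm
  let e : Fin l ⊕ Fin t ≃ Fin (l + t) := finSumFinEquiv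
  let A := (toeplitz F (l + t)).submatrix (ρ ∘ e) e
  let B := (toeplitz (PowerSeries.evalNegHom G) (l + t)).submatrix e (ρ ∘ e)
  have hAB : A * B = 1 := by
    rw [Matrix.submatrix_mul_equiv, toeplitz_mul, hFG, toeplitz_one,
      Matrix.submatrix_one _ (ρ.injective.comp e.injective)]
  have hdetA : A.det = (-1) ^ ∑ j, β j := by
    have : A = ((toeplitz F (l + t)).submatrix ρ id).submatrix e e := rfl
    rw [this, Matrix.det_submatrix_equiv_self, Matrix.det_permute, det_toeplitz, hF,
      h.sign_perm ρ hl hr]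
    simp
  have hA : A.toBlocks₁₁.det = jacobiTrudi F fun i => (α i : ℤ) := by
    rw [jacobiTrudi, ← Matrix.det_submatrix_equiv_self Fin.revPerm]
    congr 1
    ext i j
    simp only [A, e, Matrix.toBlocks₁₁, Matrix.submatrix_apply, Matrix.of_apply, toeplitz_apply,
      Function.comp_apply, finSumFinEquiv_apply_left, hl, Fin.val_castAdd, Fin.revPerm_apply,
      Fin.val_rev, Fin.rev_rev]
    congr 1
    omega
  have hB : B.toBlocks₂₂.det = (-1) ^ (∑ j, β j) * jacobiTrudi G fun j => (β j : ℤ) := by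
    rw [← jacobiTrudi_evalNegHom, jacobiTrudi, ← Matrix.det_transpose]
    congr 1
    ext j k
    have := h.right_le j
    simp only [B, e, Matrix.transpose_apply, Matrix.toBlocks₂₂, Matrix.submatrix_apply,
      Matrix.of_apply, toeplitz_apply, Function.comp_apply, finSumFinEquiv_apply_right, hr,
      Fin.val_natAdd]
    congr 1
    omega
  rw [← hA, det_toBlocks₁₁_of_mul_eq_one hAB, hdetA, hB, ← mul_assoc, ← pow_add,
    (Even.add_self _).neg_one_pow, one_mul]

/-- The `c`-th row length (0-indexed) of the conjugate of the partition `β`. -/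
def conjNat {l : ℕ} (β : Fin l → ℕ) (c : ℕ) : ℕ :=
  (Finset.univ.filter fun i => c + 1 ≤ β i).card

theorem lt_conjNat_iff {l : ℕ} {β : Fin l → ℕ} (hβ : Antitone β) (i : Fin l) (c : ℕ) :
    (i : ℕ) < conjNat β c ↔ c < β i := by
  constructor
  · intro hi
    by_contra! hc
    have hsub : (Finset.univ.filter fun k => c + 1 ≤ β k) ⊆ Finset.Iio i := fun k hk => by
      rw [Finset.mem_Iio]
      by_contra! hki
      have := hβ hki
      have := (Finset.mem_filter.1 hk).2
      omega
    exact hi.not_ge ((Finset.card_le_card hsub).trans_eq (Fin.card_Iio i))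
  · intro hc
    have hsub : Finset.Iic i ⊆ Finset.univ.filter fun k => c + 1 ≤ β k := fun k hk =>
      Finset.mem_filter.2 ⟨Finset.mem_univ k, hc.trans_le (hβ (Finset.mem_Iic.1 hk))⟩
    exact Nat.succ_le_iff.1 ((Fin.card_Iic i).symm.trans_le (Finset.card_le_card hsub))

theorem conjNat_eq_zero {l : ℕ} {β : Fin l → ℕ} {c : ℕ} (hc : ∀ i, β i ≤ c) : conjNat β c = 0 :=
  Finset.card_eq_zero.2 (Finset.filter_eq_empty_iff.2 fun i _ => (Nat.lt_succ_of_le (hc i)).not_ge)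

theorem sum_conjNat {l N : ℕ} {β : Fin l → ℕ} (hβ : ∀ i, β i ≤ N) :
    ∑ c : Fin N, conjNat β c = ∑ i, β i := by
  simp only [conjNat, Finset.card_filter]
  rw [Finset.sum_comm]
  refine Finset.sum_congr rfl fun i _ => ?_
  rw [← Finset.card_filter]
  simp only [Nat.succ_le_iff]
  rw [Fin.card_filter_val_lt, min_eq_right (hβ i)]

theorem areConjugate_conjNat {l N : ℕ} {β : Fin l → ℕ} (hβ : Antitone β) (hN : ∀ i, β i ≤ N) :
    AreConjugate (fun c : Fin N => conjNat β c) β :=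
  ⟨fun c i => lt_conjNat_iff hβ i c,
    fun _ => (Finset.card_le_univ _).trans_eq (Fintype.card_fin l), hN⟩

end Duality

/-! ### Multiplication of the symbol by a linear factor -/

section LinearFactor

variable {R S : Type*} [CommRing R] {N : ℕ}

theorem coeffZ_one_add_C_mul_X_mul (s : R) (F : PowerSeries R) (n : ℤ) :
    coeffZ ((1 + PowerSeries.C s * PowerSeries.X) * F) n =
      coeffZ F n + s * coeffZ F (n - 1) := by
  rcases lt_or_ge n 0 with hn | hn
  · rw [coeffZ_of_neg _ hn, coeffZ_of_neg _ hn, coeffZ_of_neg _ (by omega), mul_zero, add_zero]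
  · lift n to ℕ using hn
    rw [coeffZ_natCast, coeffZ_natCast, add_mul, one_mul, mul_assoc, map_add,
      PowerSeries.coeff_C_mul]
    rcases n with _ | n
    · rw [coeffZ_of_neg _ (by omega), PowerSeries.coeff_zero_X_mul]
    · rw [PowerSeries.coeff_succ_X_mul, Nat.cast_succ, add_sub_cancel_right, coeffZ_natCast]

/-- Both sides equal the determinant of `A` bordered on top by the row `((-s)^c)_c`, which the
column operations `col_{c+1} += s * col_c` reduce to `(1, 0, …, 0)`. -/
theorem det_succ_add_mul_castSucc (A : Matrix (Fin N) (Fin (N + 1)) R) (s : R) :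
    (Matrix.of fun i c : Fin N => A i c.succ + s * A i c.castSucc).det =
      ∑ j : Fin (N + 1), s ^ (j : ℕ) * (A.submatrix id j.succAbove).det := by
  let V : Matrix (Fin (N + 1)) (Fin (N + 1)) R :=
    Matrix.of (Fin.cons (fun c : Fin (N + 1) => (-s) ^ (c : ℕ)) fun i => A i)
  let B : Matrix (Fin (N + 1)) (Fin (N + 1)) R :=
    Matrix.of (Fin.cons (Fin.cons 1 fun _ => 0) fun i =>
      Fin.cons (A i 0) fun c : Fin N => A i c.succ + s * A i c.castSucc)
  have hVB : V.det = B.det := by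
    refine Matrix.det_eq_of_forall_col_eq_smul_add_pred (fun _ => -s) ?_ ?_
    · exact Fin.cases (by simp [V, B]) fun i => by simp [V, B]
    · refine Fin.cases (fun c => ?_) fun i c => ?_
      · simp [V, B, pow_succ, mul_comm]
      · simp [V, B]
  have hV : V.det = ∑ j : Fin (N + 1), s ^ (j : ℕ) * (A.submatrix id j.succAbove).det := by
    rw [Matrix.det_succ_row_zero]
    refine Finset.sum_congr rfl fun j _ => ?_
    have hsign : (-1) ^ (j : ℕ) * V 0 j = s ^ (j : ℕ) := by simp [V, ← mul_pow]
    rw [hsign]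
    rfl
  have hB : B.det = (Matrix.of fun i c : Fin N => A i c.succ + s * A i c.castSucc).det := by
    rw [Matrix.det_succ_row_zero, Fin.sum_univ_succ]
    simp only [B, Matrix.of_apply, Fin.cons_zero, Fin.cons_succ, Fin.val_zero, pow_zero, mul_one,
      one_mul, mul_zero, zero_mul, Finset.sum_const_zero, add_zero]
    congr 1
  rw [← hB, ← hVB, hV]

/-- The maximal minor of the `N × (N + 1)` matrix `(F_{ν_i - i + c})` omitting the column `j`. -/
def jacobiTrudiMinor (F : PowerSeries R) (ν : Fin N → ℤ) (j : Fin (N + 1)) : R :=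
  (Matrix.of fun i c : Fin N => coeffZ F (ν i - ((i : ℕ) : ℤ) + ((j.succAbove c : ℕ) : ℤ))).det

theorem map_jacobiTrudiMinor [CommRing S] (f : R →+* S) (F : PowerSeries R) (ν : Fin N → ℤ)
    (j : Fin (N + 1)) : f (jacobiTrudiMinor F ν j) = jacobiTrudiMinor (F.map f) ν j := by
  simp only [jacobiTrudiMinor, RingHom.map_det, RingHom.mapMatrix_apply, ← map_coeffZ]
  rfl

theorem jacobiTrudi_one_add_C_mul_X_mul_eq_sum_minor (s : R) (F : PowerSeries R) (ν : Fin N → ℤ) :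
    jacobiTrudi ((1 + PowerSeries.C s * PowerSeries.X) * F) (fun i => ν i + 1) =
      ∑ j : Fin (N + 1), s ^ (j : ℕ) * jacobiTrudiMinor F ν j := by
  refine Eq.trans ?_ (det_succ_add_mul_castSucc
    (Matrix.of fun i c => coeffZ F (ν i - ((i : ℕ) : ℤ) + ((c : ℕ) : ℤ))) s)
  unfold jacobiTrudi
  congr 2
  ext i c
  simp only [coeffZ_one_add_C_mul_X_mul, Matrix.of_apply, Fin.val_succ, Fin.val_castSucc]
  push_cast
  ring_nf

theorem jacobiTrudi_one_add_C_mul_X_mul_eq_sum_finset (s : R) (F : PowerSeries R) (ν : Fin N → ℤ) :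
    jacobiTrudi ((1 + PowerSeries.C s * PowerSeries.X) * F) (fun i => ν i + 1) =
      ∑ u : Finset (Fin N), s ^ (N - u.card) *
        jacobiTrudi F fun i => ν i + if i ∈ u then 1 else 0 := by
  let row (n : ℤ) : Fin N → R := fun c => coeffZ F (n + ((c : ℕ) : ℤ))
  have hrows : jacobiTrudi ((1 + PowerSeries.C s * PowerSeries.X) * F) (fun i => ν i + 1) =
      Matrix.detRowAlternating ((fun i : Fin N => row (ν i + 1 - (i : ℕ))) +
        fun i : Fin N => s • row (ν i - (i : ℕ))) := by
    unfold jacobiTrudi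
    congr 1
    ext i c
    simp only [coeffZ_one_add_C_mul_X_mul, Matrix.of_apply, Pi.add_apply, Pi.smul_apply,
      smul_eq_mul, row]
    ring_nf
  rw [hrows, AlternatingMap.map_add_univ]
  refine Finset.sum_congr rfl fun u _ => ?_
  have hpiecewise : (u.piecewise (fun i : Fin N => row (ν i + 1 - (i : ℕ)))
      fun i : Fin N => s • row (ν i - (i : ℕ))) = fun i =>
        (if i ∈ u then 1 else s) • row (ν i + (if i ∈ u then 1 else 0) - (i : ℕ)) := by
    ext i c
    by_cases hi : i ∈ u <;> simp [hi]
  have hprod : (∏ i, if i ∈ u then 1 else s) = s ^ (N - u.card) := by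
    rw [Finset.prod_ite, Finset.prod_const_one, one_mul, Finset.prod_const, Finset.filter_not,
      Finset.filter_mem_eq_inter, Finset.univ_inter, ← Finset.compl_eq_univ_sdiff,
      Finset.card_compl, Fintype.card_fin]
  rw [hpiecewise, AlternatingMap.map_smul_univ, hprod]
  rfl

theorem coeff_jacobiTrudi_one_add_C_X_mul_X (F : PowerSeries R) (ν : Fin N → ℤ) (j : Fin (N + 1)) :
    (jacobiTrudi ((1 + PowerSeries.C Polynomial.X * PowerSeries.X) * F.map Polynomial.C)
      fun i => ν i + 1).coeff j = jacobiTrudiMinor F ν j := by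
  simp only [jacobiTrudi_one_add_C_mul_X_mul_eq_sum_minor, ← map_jacobiTrudiMinor,
    Polynomial.finsetSum_coeff, Polynomial.X_pow_mul_C, Polynomial.coeff_C_mul_X_pow, Fin.val_inj,
    Finset.sum_ite_eq, Finset.mem_univ, if_true]

theorem natDegree_jacobiTrudi_one_add_C_X_mul_X_le (F : PowerSeries R) (ν : Fin N → ℤ) :
    (jacobiTrudi ((1 + PowerSeries.C Polynomial.X * PowerSeries.X) * F.map Polynomial.C)
      fun i => ν i + 1).natDegree ≤ N := by
  simp only [jacobiTrudi_one_add_C_mul_X_mul_eq_sum_minor, ← map_jacobiTrudiMinor,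
    Polynomial.X_pow_mul_C]
  exact Polynomial.natDegree_sum_le_of_forall_le _ _ fun j _ =>
    (Polynomial.natDegree_C_mul_X_pow_le _ _).trans j.is_le

end LinearFactor

/-! ### The vertical Pieri rule -/

section Pieri

variable {R : Type*} [CommRing R] {N : ℕ} {F G : PowerSeries R}

theorem jacobiTrudi_snoc_zero (hF : PowerSeries.constantCoeff F = 1) (ν : Fin N → ℤ) :
    jacobiTrudi F (Fin.snoc ν 0 : Fin (N + 1) → ℤ) = jacobiTrudi F ν := by
  rw [jacobiTrudi, Matrix.det_succ_row _ (Fin.last N), Fin.sum_univ_castSucc]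
  have hlast (c : Fin N) : coeffZ F (0 - (N : ℤ) + ((c : ℕ) : ℤ)) = 0 :=
    coeffZ_of_neg F (by omega)
  simp only [Matrix.of_apply, Fin.snoc_last, Fin.val_last, Fin.val_castSucc, hlast, mul_zero,
    zero_mul, Finset.sum_const_zero, zero_add]
  simp [← two_mul, coeffZ, hF, jacobiTrudi, Matrix.submatrix]

/-- From row `k` on, the matrix agrees with the Toeplitz matrix of `F`. -/
theorem vecMul_coeffZ_eq_single {H : PowerSeries R} (hFH : F * H = 1) {κ : Fin N → ℤ} {k : Fin N}
    (hκ : ∀ i, k ≤ i → κ i = 0) :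
    Matrix.vecMul (fun i : Fin N => coeffZ H (((i : ℕ) : ℤ) - ((k : ℕ) : ℤ)))
      (Matrix.of fun i c : Fin N => coeffZ F (κ i - ((i : ℕ) : ℤ) + ((c : ℕ) : ℤ))) =
        Pi.single k 1 := by
  ext c
  have hsum := sum_range_coeffZ_mul_coeffZ F H (show ((c : ℕ) : ℤ) < (N : ℕ) by omega) k
  rw [hFH, coeffZ_one, Finset.sum_range] at hsum
  simp only [sub_eq_zero, Nat.cast_inj] at hsum
  simp only [Pi.single_apply, Fin.ext_iff, ← hsum, Matrix.vecMul, dotProduct, Matrix.of_apply]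
  refine Finset.sum_congr rfl fun i _ => ?_
  rcases lt_or_ge i k with hi | hi
  · have : (i : ℕ) < k := hi
    rw [coeffZ_of_neg H (by omega), zero_mul, mul_zero]
  · rw [hκ i hi, mul_comm]
    ring_nf

/-- The coefficients of `1 / F`, shifted by `k`, form a row vector mapped to the `k`-th unit vector
by the Jacobi–Trudi matrix of `(ν, 0)`, so its determinant times this vector is the `k`-th row of
its adjugate. -/
theorem jacobiTrudiMinor_eq_coeff_mul (hF : PowerSeries.constantCoeff F = 1)
    (hFG : F * PowerSeries.evalNegHom G = 1) {ν : Fin N → ℤ} (k : Fin (N + 1))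
    (hν : ∀ i : Fin N, (k : ℕ) ≤ i → ν i = 0) :
    jacobiTrudiMinor F ν k = PowerSeries.coeff (N - k) G * jacobiTrudi F ν := by
  let A : Matrix (Fin (N + 1)) (Fin (N + 1)) R := Matrix.of fun i c =>
    coeffZ F ((Fin.snoc ν 0 : Fin (N + 1) → ℤ) i - ((i : ℕ) : ℤ) + ((c : ℕ) : ℤ))
  let g : Fin (N + 1) → R := fun i =>
    coeffZ (PowerSeries.evalNegHom G) (((i : ℕ) : ℤ) - ((k : ℕ) : ℤ))
  have hdet : A.det = jacobiTrudi F ν := jacobiTrudi_snoc_zero hF ν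
  have hgA : Matrix.vecMul g A = Pi.single k 1 := vecMul_coeffZ_eq_single hFG fun i hi => by
    induction i using Fin.lastCases with
    | last => rw [Fin.snoc_last]
    | cast i => rw [Fin.snoc_castSucc, hν i hi]
  have hadj : A.adjugate k (Fin.last N) = g (Fin.last N) * A.det := by
    have hmul := congrArg (Matrix.vecMul g) (Matrix.mul_adjugate A)
    rw [← Matrix.vecMul_vecMul, hgA, Matrix.single_one_vecMul] at hmul
    simpa [Matrix.vecMul, dotProduct, Matrix.one_apply, mul_comm] using
      congrFun hmul (Fin.last N)
  have hminor : A.adjugate k (Fin.last N) = (-1) ^ (N + k : ℕ) * jacobiTrudiMinor F ν k := by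
    rw [Matrix.adjugate_fin_succ_eq_det_submatrix, Fin.val_last]
    simp only [A, jacobiTrudiMinor, Matrix.submatrix, Fin.succAbove_last, Matrix.of_apply,
      Fin.snoc_castSucc, Fin.val_castSucc]
  have hglast : g (Fin.last N) = (-1) ^ (N - k : ℕ) * PowerSeries.coeff (N - k) G := by
    simp only [g, Fin.val_last, ← Nat.cast_sub k.is_le, coeffZ_evalNegHom, coeffZ_natCast,
      Int.natAbs_natCast]
  have hsign : (-1 : R) ^ (N + k : ℕ) = (-1) ^ (N - k : ℕ) :=
    neg_one_pow_congr (by rw [Nat.even_add, Nat.even_sub k.is_le])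
  rw [hminor, hglast, hdet, hsign, mul_assoc] at hadj
  exact (Units.isUnit ((-1 : Rˣ) ^ (N - k : ℕ))).mul_left_cancel (by simpa using hadj)

theorem coeff_mul_jacobiTrudi_eq_sum_powersetCard (hF : PowerSeries.constantCoeff F = 1)
    (hFG : F * PowerSeries.evalNegHom G = 1) {ρ : Fin N → ℤ} {b : ℕ} (hb : b ≤ N)
    (hρ : ∀ i : Fin N, N - b ≤ i → ρ i = 0) :
    PowerSeries.coeff b G * jacobiTrudi F ρ = ∑ s ∈ Finset.powersetCard b Finset.univ,
      jacobiTrudi F fun i => ρ i + if i ∈ s then 1 else 0 := by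
  have hminor := jacobiTrudiMinor_eq_coeff_mul hF hFG (ν := ρ) ⟨N - b, by omega⟩ hρ
  rw [Nat.sub_sub_self hb] at hminor
  rw [← hminor, ← coeff_jacobiTrudi_one_add_C_X_mul_X,
    jacobiTrudi_one_add_C_mul_X_mul_eq_sum_finset, Finset.powersetCard_eq_filter,
    Finset.powerset_univ, Finset.sum_filter, Polynomial.finsetSum_coeff]
  refine Finset.sum_congr rfl fun u _ => ?_
  have : u.card ≤ N := by simpa using u.card_le_univ
  rw [← map_jacobiTrudi, Polynomial.X_pow_mul_C, Polynomial.coeff_C_mul_X_pow]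
  exact if_congr (by dsimp only; omega) rfl rfl

/-- `lam / ρ` is a vertical `b`-strip: the row lengths of `lam` exceed those of `ρ` by at most one,
and by `b` in total. -/
def IsVerticalStrip (ρ lam : Fin N → ℕ) (b : ℕ) : Prop :=
  (∀ i, ρ i ≤ lam i ∧ lam i ≤ ρ i + 1) ∧ ∑ i, lam i = ∑ i, ρ i + b

theorem isVerticalStrip_iff_exists_finset {ρ lam : Fin N → ℕ} {b : ℕ} :
    IsVerticalStrip ρ lam b ↔
      ∃ s : Finset (Fin N), s.card = b ∧ (fun i => ρ i + if i ∈ s then 1 else 0) = lam := by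
  constructor
  · rintro ⟨hlam, hsum⟩
    have heq : (fun i => ρ i + if i ∈ Finset.univ.filter (fun i => lam i ≠ ρ i) then 1 else 0) =
        lam := by
      ext i
      have := hlam i
      by_cases h : lam i = ρ i
      · simp [h]
      · simp [h]
        omega
    refine ⟨_, ?_, heq⟩
    rw [← heq] at hsum
    simpa [Finset.sum_add_distrib, -Finset.mem_filter] using hsum
  · rintro ⟨s, rfl, rfl⟩
    refine ⟨fun i => ⟨Nat.le_add_right _ _, ?_⟩, ?_⟩
    · dsimp only
      split_ifs <;> omega
    · simp [Finset.sum_add_distrib]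

theorem finsum_isVerticalStrip_eq_sum_powersetCard {M : Type*} [AddCommMonoid M] {ρ : Fin N → ℕ}
    {f : (Fin N → ℕ) → M}
    (hf : ∀ s : Finset (Fin N), ¬ Antitone (fun i => ρ i + if i ∈ s then 1 else 0) →
      f (fun i => ρ i + if i ∈ s then 1 else 0) = 0) (b : ℕ) :
    ∑ᶠ (lam : Fin N → ℕ) (_ : Antitone lam ∧ IsVerticalStrip ρ lam b), f lam =
      ∑ s ∈ Finset.powersetCard b Finset.univ, f fun i => ρ i + if i ∈ s then 1 else 0 := by
  classical
  let shift (s : Finset (Fin N)) : Fin N → ℕ := fun i => ρ i + if i ∈ s then 1 else 0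
  have hshift : Function.Injective shift := by
    intro s u hsu
    ext i
    have := congrFun hsu i
    by_cases hs : i ∈ s <;> by_cases hu : i ∈ u <;> simp_all [shift]
  have hset : {lam | Antitone lam ∧ IsVerticalStrip ρ lam b} =
      Set.image shift ((Finset.powersetCard b Finset.univ).filter fun s => Antitone (shift s)) := by
    ext lam
    simp only [isVerticalStrip_iff_exists_finset, Set.mem_ofPred_eq, Set.mem_image,
      Finset.mem_coe, Finset.mem_filter, Finset.mem_powersetCard_univ]
    constructor
    · rintro ⟨hlam, s, hs, rfl⟩
      exact ⟨s, ⟨hs, hlam⟩, rfl⟩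
    · rintro ⟨s, ⟨hs, hlam⟩, rfl⟩
      exact ⟨hlam, s, hs, rfl⟩
  change ∑ᶠ lam ∈ {lam | Antitone lam ∧ IsVerticalStrip ρ lam b}, f lam = _
  rw [hset, finsum_mem_image hshift.injOn, finsum_mem_coe_finset,
    Finset.sum_filter_of_ne fun s _ hs => not_imp_comm.1 (hf s) hs]

theorem coeff_mul_jacobiTrudi_eq_finsum_isVerticalStrip (hF : PowerSeries.constantCoeff F = 1)
    (hFG : F * PowerSeries.evalNegHom G = 1) {ρ : Fin N → ℕ} (hρ : Antitone ρ) {b : ℕ}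
    (hb : b ≤ N) (hzero : ∀ i : Fin N, N - b ≤ i → ρ i = 0) :
    PowerSeries.coeff b G * jacobiTrudi F (fun i => (ρ i : ℤ)) =
      ∑ᶠ (lam : Fin N → ℕ) (_ : Antitone lam ∧ IsVerticalStrip ρ lam b),
        jacobiTrudi F fun i => (lam i : ℤ) := by
  rw [finsum_isVerticalStrip_eq_sum_powersetCard, coeff_mul_jacobiTrudi_eq_sum_powersetCard hF hFG
    hb fun i hi => by rw [hzero i hi, Nat.cast_zero]]
  · simp only [Nat.cast_add, Nat.cast_ite, Nat.cast_one, Nat.cast_zero]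
  · refine fun s hs => jacobiTrudi_eq_zero_of_not_antitone F (fun i j hij => ?_) fun h =>
      hs fun i j hij => Int.ofNat_le.1 (h hij)
    have := hρ hij
    dsimp only
    split_ifs <;> push_cast <;> omega

end Pieri

/-! ### Generating series -/

section GenSeries

theorem eq_of_derivative_eq_mul {R : Type*} [CommRing R] [IsAddTorsionFree R]
    {A F G : PowerSeries R} (hF : PowerSeries.derivative R F = A * F)
    (hG : PowerSeries.derivative R G = A * G)
    (h0 : PowerSeries.constantCoeff F = PowerSeries.constantCoeff G) : F = G := by
  ext n
  induction n using Nat.strong_induction_on with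
  | _ n ih =>
    rcases n with _ | n
    · simpa using h0
    · have hsum : PowerSeries.coeff n (A * F) = PowerSeries.coeff n (A * G) := by
        simp only [PowerSeries.coeff_mul]
        refine Finset.sum_congr rfl fun p hp => ?_
        rw [ih p.2 (Nat.lt_succ_of_le (Finset.HasAntidiagonal.antidiagonal.snd_le hp))]
      rw [← hF, ← hG, PowerSeries.coeff_derivative, PowerSeries.coeff_derivative, ← Nat.cast_succ,
        mul_comm, ← nsmul_eq_mul, mul_comm, ← nsmul_eq_mul] at hsum
      exact nsmul_right_injective n.succ_ne_zero hsum

theorem derivative_rescale {R : Type*} [CommRing R] (a : R) (F : PowerSeries R) :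
    PowerSeries.derivative R (PowerSeries.rescale a F) =
      PowerSeries.C a * PowerSeries.rescale a (PowerSeries.derivative R F) := by
  ext n
  simp only [PowerSeries.coeff_derivative, PowerSeries.coeff_rescale, PowerSeries.coeff_C_mul]
  ring

theorem mk_neg_pow_mul_one_add_C_mul_X {R : Type*} [CommRing R] (x : R) :
    PowerSeries.mk (fun i => (-1) ^ i * x ^ (i + 1)) * (1 + PowerSeries.C x * PowerSeries.X) =
      PowerSeries.C x := by
  ext n
  rcases n with _ | n
  · simp
  · rw [mul_add, mul_one, ← mul_assoc, map_add, PowerSeries.coeff_succ_mul_X, PowerSeries.coeff_mk,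
      PowerSeries.coeff_mul_C, PowerSeries.coeff_mk, PowerSeries.coeff_C, if_neg n.succ_ne_zero]
    ring

theorem derivative_one_add_C_mul_X_mul {R : Type*} [CommRing R] {A F : PowerSeries R} (x : R)
    (hF : PowerSeries.derivative R F = A * F) :
    PowerSeries.derivative R ((1 + PowerSeries.C x * PowerSeries.X) * F) =
      (A + PowerSeries.mk fun i => (-1) ^ i * x ^ (i + 1)) *
        ((1 + PowerSeries.C x * PowerSeries.X) * F) := by
  have hlin : PowerSeries.derivative R (1 + PowerSeries.C x * PowerSeries.X) =
      PowerSeries.C x := by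
    rw [map_add, Derivation.map_one_eq_zero, zero_add, ← PowerSeries.smul_eq_C_mul,
      Derivation.map_smul, PowerSeries.derivative_X, PowerSeries.smul_eq_C_mul, mul_one]
  rw [Derivation.leibniz, hlin, hF, smul_eq_mul, smul_eq_mul]
  linear_combination (-F) * mk_neg_pow_mul_one_add_C_mul_X x

/-- The series `∑_k g_k t^k = exp (∑_{n≥1} c n · p_n tⁿ/n)`. -/
def genSeries (c : ℕ → Fq) : PowerSeries LamF := PowerSeries.mk (genFamF c)

/-- The logarithmic derivative `∑_{n≥1} c n · p_n tⁿ⁻¹` of `genSeries c`. -/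
def logDerivSeries (c : ℕ → Fq) : PowerSeries LamF :=
  PowerSeries.mk fun i => c (i + 1) • ppF ⟨i + 1, Nat.succ_pos i⟩

theorem constantCoeff_genSeries (c : ℕ → Fq) : PowerSeries.constantCoeff (genSeries c) = 1 := by
  rw [← PowerSeries.coeff_zero_eq_constantCoeff_apply, genSeries, PowerSeries.coeff_mk, genFamF]

theorem derivative_genSeries (c : ℕ → Fq) :
    PowerSeries.derivative LamF (genSeries c) = logDerivSeries c * genSeries c := by
  ext1 k
  have hk : (k : Fq) + 1 ≠ 0 := Nat.cast_add_one_ne_zero k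
  have hcast : ((k : LamF) + 1) = algebraMap Fq LamF ((k : Fq) + 1) := by simp
  rw [PowerSeries.coeff_derivative, mul_comm, hcast, ← Algebra.smul_def, genSeries,
    PowerSeries.coeff_mk, genFamF, smul_smul, mul_inv_cancel₀ hk, one_smul, PowerSeries.coeff_mul,
    Finset.Nat.sum_antidiagonal_eq_sum_range_succ
      fun a b => PowerSeries.coeff a (logDerivSeries c) *
        PowerSeries.coeff b (PowerSeries.mk (genFamF c))]
  simp only [logDerivSeries, PowerSeries.coeff_mk, smul_mul_assoc]

theorem genSeries_add (c d : ℕ → Fq) : genSeries (c + d) = genSeries c * genSeries d := by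
  refine eq_of_derivative_eq_mul (derivative_genSeries _) ?_ ?_
  · have hlog : logDerivSeries (c + d) = logDerivSeries c + logDerivSeries d := by
      ext1 k
      simp only [logDerivSeries, PowerSeries.coeff_mk, map_add, Pi.add_apply, add_smul]
    rw [Derivation.leibniz, derivative_genSeries, derivative_genSeries, hlog, smul_eq_mul,
      smul_eq_mul]
    ring
  · simp only [map_mul, constantCoeff_genSeries, mul_one]

theorem genSeries_zero : genSeries 0 = 1 := by
  refine eq_of_derivative_eq_mul (derivative_genSeries 0) ?_ ?_
  · have hlog : logDerivSeries 0 = 0 := by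
      ext1 k
      simp only [logDerivSeries, PowerSeries.coeff_mk, Pi.zero_apply, zero_smul, map_zero]
    rw [hlog, zero_mul, Derivation.map_one_eq_zero]
  · rw [constantCoeff_genSeries, map_one]

theorem rescale_genSeries (a : Fq) (c : ℕ → Fq) :
    PowerSeries.rescale (C a) (genSeries c) = genSeries fun n => a ^ n * c n := by
  refine eq_of_derivative_eq_mul ?_ (derivative_genSeries _) ?_
  · have hlog : logDerivSeries (fun n => a ^ n * c n) =
        PowerSeries.C (C a) * PowerSeries.rescale (C a) (logDerivSeries c) := by
      ext1 k
      simp only [logDerivSeries, PowerSeries.coeff_mk, PowerSeries.coeff_C_mul,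
        PowerSeries.coeff_rescale, smul_eq_C_mul, map_mul, map_pow]
      ring
    rw [derivative_rescale, derivative_genSeries, map_mul, hlog, mul_assoc]
  · rw [constantCoeff_genSeries, ← PowerSeries.coeff_zero_eq_constantCoeff_apply,
      PowerSeries.coeff_rescale, PowerSeries.coeff_zero_eq_constantCoeff_apply,
      constantCoeff_genSeries, pow_zero, mul_one]

/-- The generating series of the complete homogeneous symmetric functions. -/
def hSeries : PowerSeries LamF := genSeries fun _ => 1

/-- The generating series of the elementary symmetric functions. -/
def eSeries : PowerSeries LamF := genSeries fun n => (-1) ^ (n + 1)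

theorem evalNegHom_genSeries (c : ℕ → Fq) :
    PowerSeries.evalNegHom (genSeries c) = genSeries fun n => (-1) ^ n * c n := by
  rw [← rescale_genSeries, PowerSeries.evalNegHom, map_neg, map_one]

theorem hSeries_mul_evalNegHom_eSeries : hSeries * PowerSeries.evalNegHom eSeries = 1 := by
  rw [hSeries, eSeries, evalNegHom_genSeries, ← genSeries_add, ← genSeries_zero]
  congr 1
  ext n
  simp [pow_succ, ← mul_pow]

theorem evalNegHom_rescale_eSeries_mul_eSeries : PowerSeries.evalNegHom
    (PowerSeries.rescale (C (qq ^ 2)) eSeries * eSeries) =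
      genSeries fun n => -(1 + qq ^ (2 * n)) := by
  rw [eSeries, rescale_genSeries, ← genSeries_add, evalNegHom_genSeries]
  congr 1
  ext n
  have hsign : (-1 : Fq) ^ n * (-1) ^ (n + 1) = -1 := by simp [pow_succ, ← mul_pow]
  simp only [Pi.add_apply, ← pow_mul]
  linear_combination (1 + qq ^ (2 * n)) * hsign

theorem coeffZ_eSeries (n : ℤ) : coeffZ eSeries n = eZF n := by
  simp only [coeffZ, eSeries, genSeries, PowerSeries.coeff_mk, eZF, eeF]

theorem coeff_eSeries (n : ℕ) : PowerSeries.coeff n eSeries = eeF n := by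
  rw [eSeries, genSeries, PowerSeries.coeff_mk, eeF]

theorem schurF_eq_jacobiTrudi {l : ℕ} (ν : Fin l → ℤ) : schurF ν = jacobiTrudi hSeries ν := by
  simp only [schurF, jacobiTrudi, coeffZ, hSeries, genSeries, PowerSeries.coeff_mk, hZF, hhF]

theorem schurEF_eq_jacobiTrudi {l : ℕ} (ν : Fin l → ℤ) : schurEF ν = jacobiTrudi eSeries ν := by
  simp only [schurEF, jacobiTrudi, coeffZ_eSeries]

theorem AreConjugate.schurF_eq_schurEF {l t : ℕ} {α : Fin l → ℕ} {β : Fin t → ℕ}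
    (h : AreConjugate α β) : schurF (fun i => (α i : ℤ)) = schurEF fun j => (β j : ℤ) := by
  rw [schurF_eq_jacobiTrudi, schurEF_eq_jacobiTrudi]
  exact h.jacobiTrudi_eq (constantCoeff_genSeries _) hSeries_mul_evalNegHom_eSeries

theorem HZm_eq_finsum (k : ℤ) :
    HZm k = (-1 : Fq) ^ k • ∑ᶠ b : ℕ, qq ^ (2 * (b : ℤ)) • (eeF b * eZF (k - b)) := by
  have hH : HZm k = coeffZ (genSeries fun n => -(1 + qq ^ (2 * n))) k := by
    simp only [HZm, HmF, coeffZ, genSeries, PowerSeries.coeff_mk]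
  have hterm (b : ℕ) : PowerSeries.coeff b (PowerSeries.rescale (C (qq ^ 2)) eSeries) *
      coeffZ eSeries (k - b) = qq ^ (2 * (b : ℤ)) • (eeF b * eZF (k - b)) := by
    rw [PowerSeries.coeff_rescale, coeff_eSeries, coeffZ_eSeries, mul_assoc, ← map_pow,
      ← smul_eq_C_mul, ← pow_mul]
    norm_cast
  have hsign : (-1 : LamF) ^ k.natAbs = algebraMap Fq LamF ((-1) ^ k) := by
    simp only [neg_one_zpow_eq_ite, neg_one_pow_eq_ite, Int.natAbs_even]
    split_ifs <;> simp
  rw [hH, ← evalNegHom_rescale_eSeries_mul_eSeries, coeffZ_evalNegHom, coeffZ_mul,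
    finsum_congr hterm, hsign, Algebra.smul_def]

end GenSeries

/-! ### Constant-coefficient differential operators and translations -/

section DifferentialOperators

/-- The operator `i·∂/∂p_i`. -/
def scaledPderiv (i : ℕ+) : Module.End Fq LamF := ((i : ℕ) : Fq) • (pderiv i).toLinearMap

theorem pderiv_comm {R σ : Type*} [CommRing R] (i j : σ) (P : MvPolynomial σ R) :
    pderiv i (pderiv j P) = pderiv j (pderiv i P) := by
  have hlie : ⁅(pderiv i : Derivation R (MvPolynomial σ R) (MvPolynomial σ R)),
      (pderiv j : Derivation R (MvPolynomial σ R) (MvPolynomial σ R))⁆ = 0 := by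
    classical
    refine MvPolynomial.derivation_ext fun k => ?_
    rw [Derivation.commutator_apply, pderiv_X, pderiv_X]
    by_cases hi : i = k <;> by_cases hj : j = k <;> simp [hi, hj]
  rw [← sub_eq_zero, ← Derivation.commutator_apply, hlie, Derivation.zero_apply]

theorem commute_scaledPderiv (i j : ℕ+) : Commute (scaledPderiv i) (scaledPderiv j) := by
  refine LinearMap.ext fun P => ?_
  simp only [scaledPderiv, Module.End.mul_apply, LinearMap.smul_apply, map_smul]
  rw [smul_comm]
  congr 2
  exact pderiv_comm i j P

open scoped IsMulCommutative

/-- The commutative algebra of constant-coefficient differential operators. -/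
abbrev ConstCoeffDiffOp : Type := Algebra.adjoin Fq (Set.range scaledPderiv)

instance : IsMulCommutative (Algebra.adjoin Fq (Set.range scaledPderiv)) :=
  Algebra.isMulCommutative_adjoin Fq <| by
    rintro _ ⟨i, rfl⟩ _ ⟨j, rfl⟩
    exact commute_scaledPderiv i j

/-- The substitution `f ↦ f(∂)`, that is, `p_i ↦ i·∂/∂p_i`, as an algebra homomorphism. -/
def diffHom : LamF →ₐ[Fq] Module.End Fq LamF :=
  (Subalgebra.val _).comp (aeval fun i : ℕ+ =>
    (⟨scaledPderiv i, Algebra.subset_adjoin ⟨i, rfl⟩⟩ : ConstCoeffDiffOp))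

theorem diffHom_ppF (i : ℕ+) : diffHom (ppF i) = scaledPderiv i := by
  simp [diffHom, ppF]

theorem diffHom_monomial_one (α : ℕ+ →₀ ℕ) : diffHom (monomial α 1) = monOpF α := by
  have hprod : (monomial α 1 : LamF) =
      ((α.support.sort (· ≤ ·)).map fun i : ℕ+ => ppF i ^ α i).prod := by
    rw [monomial_eq, C_1, one_mul, Finsupp.prod, ← List.prod_toFinset _ (Finset.sort_nodup _ _),
      Finset.sort_toFinset]
    rfl
  rw [hprod, map_list_prod, List.map_map, monOpF]
  congr 2
  ext1 i
  rw [Function.comp_apply, map_pow, diffHom_ppF, scaledPderiv]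

theorem DopF_eq_diffHom (f P : LamF) : DopF f P = diffHom f P := by
  have hf : f = ∑ α ∈ f.support, coeff α f • monomial α 1 := by
    conv_lhs => rw [f.as_sum]
    simp only [smul_monomial, smul_eq_mul, mul_one]
  conv_rhs => rw [hf]
  simp only [map_sum, map_smul, diffHom_monomial_one, LinearMap.sum_apply, LinearMap.smul_apply,
    DopF]

/-- The translation `P(p_n) ↦ P(p_n + tⁿ)`, that is, `exp (∑ tⁿ ∂/∂p_n)`. -/
def translationHom : LamF →ₐ[Fq] Polynomial LamF :=
  aeval fun n : ℕ+ => Polynomial.C (X n) + Polynomial.X ^ (n : ℕ)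

theorem translationHom_X (n : ℕ+) :
    translationHom (X n) = Polynomial.C (X n) + Polynomial.X ^ (n : ℕ) :=
  aeval_X _ n

theorem coeff_zero_translationHom (P : LamF) : (translationHom P).coeff 0 = P := by
  have hid : ((Polynomial.aeval (0 : LamF)).restrictScalars Fq).comp translationHom =
      AlgHom.id Fq LamF := by
    ext1 n
    simp [translationHom_X]
  simpa [Polynomial.coeff_zero_eq_aeval_zero] using congrArg (fun f => f P) hid

theorem X_pow_dvd_derivative_translationHom_X_sub (n : ℕ+) (N : ℕ) :
    Polynomial.X ^ N ∣ Polynomial.derivative (translationHom (X n)) - ∑ i ∈ Finset.range N,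
      ((i : Polynomial LamF) + 1) * Polynomial.X ^ i *
        translationHom (pderiv i.succPNat (X n)) := by
  obtain ⟨k, rfl⟩ : ∃ k : ℕ, n = k.succPNat := ⟨n.natPred, (PNat.succPNat_natPred n).symm⟩
  have hterm (i : ℕ) : translationHom (pderiv i.succPNat (X k.succPNat)) =
      if i = k then 1 else 0 := by
    simp only [pderiv_X, Pi.single_apply, Nat.succPNat_inj, eq_comm (a := k)]
    split_ifs <;> simp
  simp only [hterm, mul_ite, mul_one, mul_zero, Finset.sum_ite_eq', Finset.mem_range,
    translationHom_X, Polynomial.derivative_add, Polynomial.derivative_C,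
    Polynomial.derivative_X_pow, zero_add, Nat.succPNat_coe, Nat.succ_eq_add_one,
    Nat.add_sub_cancel, map_natCast]
  split_ifs with hk
  · simp
  · rw [sub_zero]
    exact (pow_dvd_pow _ (not_lt.1 hk)).mul_left _

/-- The truncated form of `d/dt P(p_n + tⁿ) = ∑ n tⁿ⁻¹ (∂P/∂p_n)(p_n + tⁿ)`. -/
theorem X_pow_dvd_derivative_translationHom_sub (P : LamF) (N : ℕ) :
    Polynomial.X ^ N ∣ Polynomial.derivative (translationHom P) - ∑ i ∈ Finset.range N,
      ((i : Polynomial LamF) + 1) * Polynomial.X ^ i * translationHom (pderiv i.succPNat P) := by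
  induction P using MvPolynomial.induction_on with
  | C a => simp [translationHom]
  | add P Q hP hQ =>
    convert dvd_add hP hQ using 1
    simp only [map_add, mul_add, Finset.sum_add_distrib]
    ring
  | mul_X P n hP =>
    have hsum : ∑ i ∈ Finset.range N, ((i : Polynomial LamF) + 1) * Polynomial.X ^ i *
          translationHom (pderiv i.succPNat (P * X n)) =
        (∑ i ∈ Finset.range N, ((i : Polynomial LamF) + 1) * Polynomial.X ^ i *
          translationHom (pderiv i.succPNat P)) * translationHom (X n) +
        translationHom P * ∑ i ∈ Finset.range N, ((i : Polynomial LamF) + 1) *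
          Polynomial.X ^ i * translationHom (pderiv i.succPNat (X n)) := by
      rw [Finset.sum_mul, Finset.mul_sum, ← Finset.sum_add_distrib]
      refine Finset.sum_congr rfl fun i _ => ?_
      rw [pderiv_mul, map_add, map_mul, map_mul]
      ring
    rw [hsum, map_mul, Polynomial.derivative_mul, add_sub_add_comm, ← sub_mul, ← mul_sub]
    exact dvd_add (hP.mul_right _)
      ((X_pow_dvd_derivative_translationHom_X_sub n N).mul_left _)

theorem add_one_smul_coeff_succ_translationHom (P : LamF) (k : ℕ) :
    ((k : Fq) + 1) • (translationHom P).coeff (k + 1) = ∑ i ∈ Finset.range (k + 1),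
      ((i : Fq) + 1) • (translationHom (pderiv i.succPNat P)).coeff (k - i) := by
  have hdvd := Polynomial.X_pow_dvd_iff.1 (X_pow_dvd_derivative_translationHom_sub P (k + 1)) k
    k.lt_succ_self
  rw [Polynomial.coeff_sub, sub_eq_zero, Polynomial.coeff_derivative,
    Polynomial.finsetSum_coeff] at hdvd
  have hscalar (a : ℕ) : (a : Polynomial LamF) + 1 = Polynomial.C (C ((a : Fq) + 1)) := by simp
  rw [smul_eq_C_mul, mul_comm]
  simp only [map_add, map_one, map_natCast] at hdvd ⊢
  rw [hdvd]
  refine Finset.sum_congr rfl fun i hi => ?_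
  rw [hscalar, mul_assoc, Polynomial.coeff_C_mul, Polynomial.coeff_X_pow_mul',
    if_pos (Finset.mem_range_succ_iff.1 hi), smul_eq_C_mul]

theorem add_one_smul_DopF_hhF_succ (k : ℕ) (P : LamF) :
    ((k : Fq) + 1) • DopF (hhF (k + 1)) P = ∑ i ∈ Finset.range (k + 1),
      ((i : Fq) + 1) • DopF (hhF (k - i)) (pderiv i.succPNat P) := by
  have hk : (k : Fq) + 1 ≠ 0 := Nat.cast_add_one_ne_zero k
  rw [hhF, genFamF, DopF_eq_diffHom, map_smul, LinearMap.smul_apply, smul_smul, mul_inv_cancel₀ hk,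
    one_smul, map_sum, LinearMap.sum_apply]
  refine Finset.sum_congr rfl fun i _ => ?_
  have hp : diffHom (ppF ⟨i + 1, i.succ_pos⟩) = scaledPderiv i.succPNat := diffHom_ppF _
  rw [one_smul, mul_comm, map_mul, Module.End.mul_apply, hp, DopF_eq_diffHom, scaledPderiv,
    LinearMap.smul_apply, map_smul, Nat.succPNat_coe, Nat.cast_succ]
  rfl

theorem DopF_hhF (k : ℕ) (P : LamF) : DopF (hhF k) P = (translationHom P).coeff k := by
  induction k using Nat.strong_induction_on generalizing P with
  | _ k ih =>
    rcases k with _ | k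
    · rw [hhF, genFamF, DopF_eq_diffHom, map_one, coeff_zero_translationHom, Module.End.one_apply]
    · have hk : (k : Fq) + 1 ≠ 0 := Nat.cast_add_one_ne_zero k
      refine smul_right_injective LamF hk ?_
      dsimp only
      rw [add_one_smul_DopF_hhF_succ, add_one_smul_coeff_succ_translationHom]
      exact Finset.sum_congr rfl fun i _ => by rw [ih (k - i) (by omega)]

theorem natDegree_translationHom_le (P : LamF) : (translationHom P).natDegree ≤ wboundF P := by
  rw [translationHom, aeval_def, eval₂_eq]
  refine Polynomial.natDegree_sum_le_of_forall_le _ _ fun α hα => ?_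
  have hweight : (α.sum fun i k => (i : ℕ) * k) ≤ wboundF P :=
    Finset.le_sup (f := fun α : ℕ+ →₀ ℕ => α.sum fun i k => (i : ℕ) * k) hα
  refine le_trans ?_ hweight
  refine (Polynomial.natDegree_C_mul_le (C (coeff α P)) _).trans ?_
  refine (Polynomial.natDegree_prod_le _ _).trans (Finset.sum_le_sum fun i _ => ?_)
  refine Polynomial.natDegree_pow_le.trans ?_
  rw [mul_comm]
  refine Nat.mul_le_mul_right _ ?_
  compute_degree

end DifferentialOperators

/-! ### The dual Bernstein operator -/

section Bernstein

theorem map_translationHom_eSeries :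
    eSeries.map (translationHom : LamF →+* Polynomial LamF) =
      (1 + PowerSeries.C Polynomial.X * PowerSeries.X) * eSeries.map Polynomial.C := by
  have hderiv (f : LamF →+* Polynomial LamF) :
      PowerSeries.derivative _ (eSeries.map f) =
        (logDerivSeries fun n => (-1) ^ (n + 1)).map f * eSeries.map f := by
    rw [← map_mul, eSeries, ← derivative_genSeries]
    ext1 n
    simp [PowerSeries.coeff_derivative]
  have hlog : (logDerivSeries fun n => (-1) ^ (n + 1)).map
        (translationHom : LamF →+* Polynomial LamF) =
      (logDerivSeries fun n => (-1) ^ (n + 1)).map Polynomial.C +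
        PowerSeries.mk fun i => (-1) ^ i * Polynomial.X ^ (i + 1) := by
    ext1 i
    have hX : translationHom (X ⟨i + 1, i.succ_pos⟩) =
      Polynomial.C (X ⟨i + 1, i.succ_pos⟩) + Polynomial.X ^ (i + 1) := translationHom_X _
    simp [logDerivSeries, ppF, hX, pow_succ, smul_eq_C_mul, mul_add]
  have hconst (f : LamF →+* Polynomial LamF) :
      PowerSeries.constantCoeff (eSeries.map f) = 1 := by
    rw [← PowerSeries.coeff_zero_eq_constantCoeff_apply, PowerSeries.coeff_map,
      PowerSeries.coeff_zero_eq_constantCoeff_apply, eSeries, constantCoeff_genSeries, map_one]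
  refine eq_of_derivative_eq_mul (hderiv _) ?_ ?_
  · rw [hlog]
    exact derivative_one_add_C_mul_X_mul _ (hderiv _)
  · simp [hconst]

/-- The mode `∑_j (-1)^j e_{B+j} · h_j(∂)` of the Bernstein vertex operator that creates the
Schur functions indexed by their conjugate partitions. -/
def dualBernstein (B : ℤ) (P : LamF) : LamF :=
  (translationHom P).sum fun j a => (-1 : Fq) ^ j • (eZF (B + j) * a)

/-- Translation multiplies the generating series of the `e_k` by a linear factor, so the
coefficients of the translated determinant are maximal minors, and `dualBernstein B` is the Laplace
expansion along a new first row. -/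
theorem dualBernstein_schurEF {t : ℕ} (B : ℤ) (ν : Fin t → ℤ) :
    dualBernstein B (schurEF ν) = schurEF (Fin.cons B ν : Fin (t + 1) → ℤ) := by
  have htranslate : translationHom (schurEF ν) =
      jacobiTrudi ((1 + PowerSeries.C Polynomial.X * PowerSeries.X) * eSeries.map Polynomial.C)
        fun i => ν i - 1 + 1 := by
    simp only [schurEF_eq_jacobiTrudi, sub_add_cancel, ← map_translationHom_eSeries]
    exact map_jacobiTrudi (translationHom : LamF →+* Polynomial LamF) eSeries ν
  rw [dualBernstein, htranslate, Polynomial.sum_over_range' _ (by simp) (t + 1)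
    (Nat.lt_succ_of_le (natDegree_jacobiTrudi_one_add_C_X_mul_X_le eSeries _)),
    Finset.sum_range, schurEF, Matrix.det_succ_row_zero]
  refine Finset.sum_congr rfl fun j _ => ?_
  have hminor : jacobiTrudiMinor eSeries (fun i => ν i - 1) j =
      ((Matrix.of fun i c : Fin (t + 1) =>
        eZF ((Fin.cons B ν : Fin (t + 1) → ℤ) i - (i.1 : ℤ) + (c.1 : ℤ))).submatrix
          Fin.succ j.succAbove).det := by
    simp only [jacobiTrudiMinor, coeffZ_eSeries]
    congr 1
    ext1 i c
    simp only [Matrix.of_apply, Matrix.submatrix_apply, Fin.cons_succ, Fin.val_succ]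
    push_cast
    ring_nf
  rw [coeff_jacobiTrudi_one_add_C_X_mul_X, hminor, Matrix.of_apply, Fin.cons_zero, Fin.val_zero,
    Nat.cast_zero, sub_zero, Algebra.smul_def, map_pow, map_neg, map_one, mul_assoc]

theorem hasFiniteSupport_eZF_sub (k : ℤ) : (fun b : ℕ => eZF (k - b)).HasFiniteSupport := by
  refine (Finset.range (k.toNat + 1)).finite_toSet.subset fun b hb => ?_
  rw [Finset.coe_range, Set.mem_Iio]
  by_contra! h
  exact hb (if_neg (by omega))

theorem HZm_add_mul (k : ℤ) (j : ℕ) (a : LamF) :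
    HZm (k + j) * a = (-1 : Fq) ^ k • ∑ᶠ b : ℕ,
      qq ^ (2 * (b : ℤ)) • (eeF b * ((-1 : Fq) ^ j • (eZF (k + j - b) * a))) := by
  rw [HZm_eq_finsum, smul_mul_assoc, finsum_mul, zpow_add₀ (by norm_num), mul_smul, zpow_natCast,
    smul_finsum]
  congr 2
  ext1 b
  simp only [smul_mul_assoc, mul_smul_comm, mul_assoc, smul_comm ((-1 : Fq) ^ j)]

theorem Xm_single (i n m : ℤ) (P : LamF) : Xm i n (Finsupp.single m P) =
    Finsupp.single (m - 1) ((-1 : Fq) ^ (n + 1 + i) • ∑ᶠ b : ℕ,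
      qq ^ (2 * (b : ℤ)) • (eeF b * dualBernstein (2 * m - n - 1 + i - b) P)) := by
  rw [Xm, Finsupp.sum_single_index (by simp [DopF_hhF])]
  congr 1
  set k : ℤ := 2 * m - n - 1 + i with hk
  have hsign : (-1 : Fq) ^ (n + 1 + i) = (-1) ^ k := by
    simp only [neg_one_zpow_eq_ite]
    exact if_congr (by rw [hk]; grind) rfl rfl
  have hindex (j : ℕ) : (j : ℤ) + 2 * m + i - n - 1 = k + j := by rw [hk]; ring
  have hfin (j : ℕ) (a : LamF) : (fun b : ℕ => qq ^ (2 * (b : ℤ)) •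
      (eeF b * ((-1 : Fq) ^ j • (eZF (k + j - b) * a)))).HasFiniteSupport :=
    ((((hasFiniteSupport_eZF_sub (k + j)).mul_left fun _ => a).smul_right
      fun _ => (-1 : Fq) ^ j).mul_right eeF).smul_right fun b : ℕ => qq ^ (2 * (b : ℤ))
  simp only [DopF_hhF, hindex, HZm_add_mul]
  rw [← Finset.smul_sum, ← finsum_sum_comm _ _ fun j _ => hfin j _, hsign]
  congr 2
  ext1 b
  rw [dualBernstein, Polynomial.sum_over_range' _ (by simp) (wboundF P + 1)
    (Nat.lt_succ_of_le (natDegree_translationHom_le P)), Finset.mul_sum, Finset.smul_sum]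
  simp only [add_sub_right_comm]

end Bernstein

/-! ### Sums over vertical strips -/

section VerticalStrips

/-- `lam` is a partition and `lam - π'` is a vertical `j`-strip, where `π'` is the conjugate of the
partition `π`; false if `π` is not a partition. -/
def IsConjVerticalStrip {r N : ℕ} (π : Fin r → ℤ) (j : ℕ) (lam : Fin N → ℕ) : Prop :=
  Antitone lam ∧ IsPartitionT π ∧
    (∀ t' : ℕ, conjT π t' ≤ padZ (fun a => (lam a : ℤ)) t') ∧
    ((∑ a, (lam a : ℤ)) = (∑ c, π c) + j) ∧
    (∀ t' : ℕ, padZ (fun a => (lam a : ℤ)) t' ≤ conjT π t' + 1)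

/-- The sum of the Schur functions `s_λ` over all partitions `λ` such that `λ - π'` is a vertical
`j`-strip. Every such `λ` has at most `|π| + j` rows, so it is encoded by the tuple of its first
`|π| + j + 1` row lengths. -/
def verticalStripSum {r : ℕ} (π : Fin r → ℤ) (j : ℕ) : LamF :=
  ∑ᶠ (lam : Fin ((∑ c, π c).toNat + j + 1) → ℕ) (_ : IsConjVerticalStrip π j lam),
    schurF fun a => (lam a : ℤ)

theorem padZ_natCast {N : ℕ} (lam : Fin N → ℕ) (a : Fin N) :
    padZ (fun a => (lam a : ℤ)) a = lam a :=
  dif_pos a.2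

theorem padZ_of_le {N : ℕ} (π : Fin N → ℤ) {c : ℕ} (hc : N ≤ c) : padZ π c = 0 :=
  dif_neg hc.not_gt

theorem conjT_natCast {r : ℕ} (β : Fin r → ℕ) (c : ℕ) :
    conjT (fun i => (β i : ℤ)) c = conjNat β c := by
  simp only [conjT, conjNat]
  norm_cast

theorem isConjVerticalStrip_natCast_iff {r N : ℕ} {β : Fin r → ℕ} (hβ : Antitone β)
    (hN : ∀ i, β i ≤ N) {j : ℕ} {lam : Fin N → ℕ} :
    IsConjVerticalStrip (fun i => (β i : ℤ)) j lam ↔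
      Antitone lam ∧ IsVerticalStrip (fun c : Fin N => conjNat β c) lam j := by
  have hpartition : IsPartitionT fun i => (β i : ℤ) :=
    ⟨fun _ _ h => Int.ofNat_le.2 (hβ h), fun _ => Int.natCast_nonneg _⟩
  have hpad (P : ℤ → ℤ → Prop) (h0 : P 0 0) :
      (∀ c, P (conjNat β c) (padZ (fun a => (lam a : ℤ)) c)) ↔
        ∀ a : Fin N, P (conjNat β a) (lam a) := by
    refine ⟨fun h a => padZ_natCast lam a ▸ h a, fun h c => ?_⟩
    rcases lt_or_ge c N with hc | hc
    · exact (padZ_natCast lam ⟨c, hc⟩).symm ▸ h ⟨c, hc⟩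
    · rw [padZ_of_le _ hc, conjNat_eq_zero fun i => (hN i).trans hc]
      exact h0
  simp only [IsConjVerticalStrip, IsVerticalStrip, hpartition, true_and, conjT_natCast,
    hpad (· ≤ ·) le_rfl, hpad (fun x y => y ≤ x + 1) zero_le_one, sum_conjNat hN]
  norm_cast
  rw [forall_and]
  tauto

theorem eeF_mul_schurEF_natCast {r N : ℕ} {β : Fin r → ℕ} (hβ : Antitone β) {j : ℕ} (hj : j ≤ N)
    (hN : ∀ i, β i ≤ N - j) :
    eeF j * schurEF (fun i => (β i : ℤ)) =
      ∑ᶠ (lam : Fin N → ℕ) (_ : IsConjVerticalStrip (fun i => (β i : ℤ)) j lam),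
        schurF fun a => (lam a : ℤ) := by
  have hβN (i : Fin r) : β i ≤ N := (hN i).trans (Nat.sub_le N j)
  have hconj : AreConjugate (fun c : Fin N => conjNat β c) β := areConjugate_conjNat hβ hβN
  simp only [isConjVerticalStrip_natCast_iff hβ hβN]
  rw [← hconj.schurF_eq_schurEF]
  simp only [schurF_eq_jacobiTrudi, ← coeff_eSeries]
  exact coeff_mul_jacobiTrudi_eq_finsum_isVerticalStrip (constantCoeff_genSeries _)
    hSeries_mul_evalNegHom_eSeries hconj.antitone_left hj
    fun _ hc => conjNat_eq_zero fun i => (hN i).trans hc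

theorem eeF_mul_schurEF_eq_verticalStripSum {r : ℕ} {π : Fin r → ℤ} (hπ : Antitone π) (j : ℕ) :
    eeF j * schurEF π = verticalStripSum π j := by
  by_cases hneg : ∃ i, π i < 0
  · obtain ⟨i, hi⟩ := hneg
    have hstrip (lam : Fin ((∑ c, π c).toNat + j + 1) → ℕ) : ¬ IsConjVerticalStrip π j lam :=
      fun h => hi.not_ge (h.2.1.2 i)
    rw [schurEF_eq_jacobiTrudi, jacobiTrudi_eq_zero_of_neg _ hπ hi, mul_zero]
    simp only [verticalStripSum, hstrip, finsum_false, finsum_zero]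
  · push Not at hneg
    lift π to Fin r → ℕ using hneg
    have hβ : Antitone π := fun _ _ h => Int.ofNat_le.1 (hπ h)
    have hle (i : Fin r) : π i ≤ ∑ c, π c :=
      Finset.single_le_sum (fun _ _ => Nat.zero_le _) (Finset.mem_univ i)
    refine eeF_mul_schurEF_natCast hβ (by omega) fun i => ?_
    rw [← Nat.cast_sum, Int.toNat_natCast]
    have := hle i
    omega

theorem eeF_mul_schurEF {r : ℕ} (ν : Fin r → ℤ) (j : ℕ) :
    eeF j * schurEF ν = (sgnT ν : Fq) • verticalStripSum (piT ν) j := by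
  rw [schurEF_eq_jacobiTrudi, jacobiTrudi_eq_sgnT_smul_piT, mul_smul_comm,
    ← schurEF_eq_jacobiTrudi, eeF_mul_schurEF_eq_verticalStripSum (piT_antitone ν),
    Int.cast_smul_eq_zsmul]

end VerticalStrips

theorem Xminus_on_schur_basis_general {t : ℕ} (ν : Fin t → ℤ) (m n i : ℤ) :
    let T : ℕ → (Fin (t + 1) → ℤ) := fun j => Fin.cons (2 * m - n - 1 + i - (j : ℤ)) ν
    Xm i n (Finsupp.single m (schurEF ν)) = Finsupp.single (m - 1) ((-1 : Fq) ^ (n + 1 + i) •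
      ∑ᶠ j : ℕ, qq ^ (2 * (j : ℤ)) • ((sgnT (T j) : Fq) • verticalStripSum (piT (T j)) j)) := by
  intro T
  simp only [Xm_single, dualBernstein_schurEF, eeF_mul_schurEF, T]

/-- action of `X_n^-` on the Schur basis via vertical strips.  For a
partition `μ`, `m, n ∈ ℤ`, `i ∈ {0,1}` and `b_j := 2m−n−1+i−j`, with `μ'` the conjugate
partition of `μ`:
`X_n^- (s_μ e^{mα}e^{iα/2})
   = (−1)^{n+1+i} (∑_{j≥0} q^{2j} · sgn((b_j,μ')) · ∑_λ s_λ) e^{(m−1)α}e^{iα/2}`,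
where the inner sum is over all partitions `λ` such that `π((b_j,μ'))` is a partition
and `λ − π((b_j,μ'))'` is a vertical `j`-strip (`ρ'` denoting the conjugate of `ρ`);
only finitely many `j` contribute.  Partitions `λ` are represented as weakly decreasing
tuples in `ℕ^{K j}` where `K j := |π((b_j,μ'))| + j + 1` bounds the number of rows. -/
theorem Xminus_on_schur_basis (l : ℕ) (mu : Fin l → ℕ) (hmu : Antitone mu)
    (hmu1 : ∀ k, 1 ≤ mu k) (m n i : ℤ) (hi : i = 0 ∨ i = 1) :
    let t : ℕ := if h : 0 < l then mu ⟨0, h⟩ else 0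
    let mu' : Fin t → ℕ := fun c => (Finset.univ.filter fun k : Fin l => c.1 + 1 ≤ mu k).card
    let T : ℕ → (Fin (t+1) → ℤ) :=
      fun j => Fin.cons (2*m - n - 1 + i - (j : ℤ)) fun c => (mu' c : ℤ)
    let K : ℕ → ℕ := fun j => (∑ c, piT (T j) c).toNat + j + 1
    Xm i n (Finsupp.single m (schurF fun k => (mu k : ℤ)))
      = Finsupp.single (m-1)
          (((-1 : Fq)) ^ (n + 1 + i) •
            ∑ᶠ j : ℕ,
              qq ^ (2*(j : ℤ)) •
                ((sgnT (T j) : Fq) •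
                  ∑ᶠ (lam : Fin (K j) → ℕ)
                    (_ : Antitone lam ∧ IsPartitionT (piT (T j)) ∧
                      (∀ t' : ℕ, conjT (piT (T j)) t' ≤ padZ (fun a => (lam a : ℤ)) t') ∧
                      ((∑ a, (lam a : ℤ)) = (∑ c, piT (T j) c) + j) ∧
                      (∀ t' : ℕ, padZ (fun a => (lam a : ℤ)) t' ≤ conjT (piT (T j)) t' + 1)),
                    schurF fun a => (lam a : ℤ))) := by
  intro t mu' T K
  have hmut (k : Fin l) : mu k ≤ t := by
    simp only [t, dif_pos k.pos]
    exact hmu (Fin.mk_le_of_le_val (Nat.zero_le _))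
  have hconj : AreConjugate mu mu' := (areConjugate_conjNat hmu hmut).symm
  rw [hconj.schurF_eq_schurEF]
  exact Xminus_on_schur_basis_general (fun c => (mu' c : ℤ)) m n i
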